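/- arXiv:2102.04200 — 2 statements merged into one kernel-verified Lean document; each statement's English description precedes it below -/
import Mathlib

section
/- Let ρ > 0 and let 𝒳 be a continuous real random variable with probability density f, finite differential Rényi entropy h_α(𝒳), and finite ρ-th absolute moment θ = E[|𝒳|^ρ]. If 1/(1+ρ) < α < 1, then h_α(𝒳) ≤ (1/ρ) ln( ((1+ρ)α−1)/(1−α) · θ ) + (1/(1−α)) ln( ρα/((1+ρ)α−1) ) + ln( 2·Γ(1/ρ + 1)·Γ(1/(1−α) − 1/ρ) / Γ(1/(1−α)) ). If α > 1, then h_α(𝒳) ≤ (1/ρ) ln( ((1+ρ)α−1)/(α−1) · θ ) + (1/(α−1)) ln( ((1+ρ)α−1)/(ρα) ) + ln( 2·Γ(1/ρ + 1)·Γ(α/(α−1)) / Γ(α/(α−1) + 1/ρ) ). In either case equality holds if and only if 𝒳 is a generalized α-Gaussian, i.e., f(x) is proportional to (1 + β|x|^ρ/θ)^{1/(α−1)} restricted to where this is nonnegative, with β = (1−α)/((1+ρ)α−1). If moreover 𝒳 ≥ 0 almost surely and θ = E[𝒳^ρ], the same inequalities hold with the factor 2 inside the last logarithm removed. -/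
/-!
Write `β = (1 - α) / ((1 + ρ) α - 1)`, `w x = max (1 + β |x| ^ ρ / θ) 0`, `N = ∫ w ^ (1 / (α - 1))`
and `K = 1 + β = ρ α / ((1 + ρ) α - 1)`. The candidate maximizer is the density
`s = N⁻¹ w ^ (1 / (α - 1))`.

Comparing `t ^ α` with its tangent at `s` (Bernoulli's inequality, `bernoulli_defect`) gives
`(α - 1) (f ^ α - α s ^ (α - 1) f + (α - 1) s ^ α) ≥ 0` pointwise, with equality only where `f = s`.
Since `s ^ (α - 1) = N ^ (1 - α) w`, the linear term integrates to a multiple of `∫ w f`, which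
the moment constraint controls: it is `K` for `α < 1` and at least `K` for
`α > 1`. Together with `∫ w ^ (α / (α - 1)) = N K` this yields
`(α - 1) (∫ f ^ α - N ^ (1 - α) K) ≥ 0`, that is `h_α ≤ log N + (1 / (1 - α)) log K`, with equality
exactly when `f = s` almost everywhere (`entropy_le_of_profile`).

It remains to evaluate `N` and `∫ w ^ (α / (α - 1))` by the Gamma function: a Tonelli argument for
`α < 1` (`integral_one_add_rpow`) and the Beta integral for `α > 1` (`integral_max_one_sub_rpow`);
the ratio `K` of the two integrals is the functional equation of `Γ`. All of this is carried out for
a measure `μ` with `∫ φ |x| dμ = C ∫_{y > 0} φ y`, so that `C = 2` (Lebesgue measure) gives the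
two-sided bounds and `C = 1` (its restriction to the half-line) the one-sided ones.
-/

open MeasureTheory Real

/-! ### The pointwise inequality -/

/-- The gap between `t ^ α` and its tangent line at `s`, multiplied by `α - 1` so that the convex
case `α > 1` and the concave case `α < 1` read the same, is nonnegative and vanishes only at `t = s`.
The contact point `s = 0` is needed for `α > 1` only, where the extremal density has compact
support. -/
lemma bernoulli_defect {α t s : ℝ} (hα0 : 0 < α) (hα1 : α ≠ 1) (ht : 0 ≤ t)
    (hs : 0 < s ∨ (s = 0 ∧ 1 < α)) :
    0 ≤ (α - 1) * (t ^ α - α * s ^ (α - 1) * t + (α - 1) * s ^ α) ∧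
      ((α - 1) * (t ^ α - α * s ^ (α - 1) * t + (α - 1) * s ^ α) = 0 → t = s) := by
  rcases hs with hs | ⟨rfl, hα⟩
  · by_cases hts : t = s
    · subst hts
      refine ⟨le_of_eq ?_, fun _ => rfl⟩
      rw [rpow_sub_one hs.ne']
      field_simp
      ring
    · have hr : -1 ≤ t / s - 1 := by linarith [div_nonneg ht hs.le]
      have hr0 : t / s - 1 ≠ 0 := by
        rw [sub_ne_zero, Ne, div_eq_one_iff_eq hs.ne']; exact hts
      have hsα : 0 < s ^ α := rpow_pos_of_pos hs α
      have key : (α - 1) * (t ^ α - α * s ^ (α - 1) * t + (α - 1) * s ^ α)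
          = s ^ α * ((α - 1) * ((1 + (t / s - 1)) ^ α - (1 + α * (t / s - 1)))) := by
        rw [add_sub_cancel, div_rpow ht hs.le, rpow_sub_one hs.ne']
        field_simp
        ring
      have pos : 0 < (α - 1) * ((1 + (t / s - 1)) ^ α - (1 + α * (t / s - 1))) := by
        rcases lt_or_gt_of_ne hα1 with h | h
        · have := rpow_one_add_lt_one_add_mul_self hr hr0 hα0 h
          nlinarith
        · have := one_add_mul_self_lt_rpow_one_add hr hr0 h
          nlinarith
      rw [key]
      have := mul_pos hsα pos
      exact ⟨this.le, fun h => absurd h this.ne'⟩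
  · rw [zero_rpow (by linarith : α - 1 ≠ 0), zero_rpow hα0.ne']
    have : 0 ≤ t ^ α := rpow_nonneg ht α
    refine ⟨by nlinarith, fun h => ?_⟩
    have h1 : t ^ α = 0 := by
      have : (α - 1) * t ^ α = 0 := by linarith
      rcases mul_eq_zero.1 this with h | h
      · linarith
      · exact h
    exact (rpow_eq_zero ht hα0.ne').1 h1

/-! ### Gamma-function integrals -/

/-- A nonzero Bochner integral already forces integrability, so its value can be transferred to the
Lebesgue integral without a separate integrability proof. -/
lemma lintegral_ofReal_of_integral {X : Type*} [MeasurableSpace X] {μ : Measure X} {φ : X → ℝ}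
    {c : ℝ} (h0 : 0 ≤ᵐ[μ] φ) (h : ∫ x, φ x ∂μ = c) (hc : 0 < c) :
    ∫⁻ x, ENNReal.ofReal (φ x) ∂μ = ENNReal.ofReal c := by
  rw [← h, ofReal_integral_eq_lintegral_ofReal _ h0]
  exact Integrable.of_integral_ne_zero (by rw [h]; exact hc.ne')

/-- Obtained by integrating `t ^ (p - 1) * exp (-(1 + b * y ^ ρ) * t)` over the quadrant in both
orders. -/
lemma integral_one_add_rpow {ρ b p : ℝ} (hρ : 0 < ρ) (hb : 0 < b) (hp : 1 / ρ < p) :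
    ∫ y in Set.Ioi (0 : ℝ), (1 + b * y ^ ρ) ^ (-p)
      = b ^ (-1 / ρ) * Gamma (1 / ρ + 1) * Gamma (p - 1 / ρ) / Gamma p := by
  have hρ' : 0 < 1 / ρ := by positivity
  have hp0 : 0 < p := hρ'.trans hp
  have hGp := Gamma_pos_of_pos hp0
  have hG1 : 0 < Gamma (1 / ρ + 1) := Gamma_pos_of_pos (by positivity)
  have hG2 : 0 < Gamma (p - 1 / ρ) := Gamma_pos_of_pos (by linarith)
  set F : ℝ → ℝ → ENNReal := fun y t =>
    ENNReal.ofReal (t ^ (p - 1) * exp (-((1 + b * y ^ ρ) * t))) with hF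
  have hswap : ∫⁻ y in Set.Ioi (0 : ℝ), ∫⁻ t in Set.Ioi (0 : ℝ), F y t
      = ∫⁻ t in Set.Ioi (0 : ℝ), ∫⁻ y in Set.Ioi (0 : ℝ), F y t := by
    apply lintegral_lintegral_swap
    apply Measurable.aemeasurable
    simp only [hF, Function.uncurry_def]
    fun_prop
  have h1 : ∫⁻ y in Set.Ioi (0 : ℝ), ∫⁻ t in Set.Ioi (0 : ℝ), F y t
      = ∫⁻ y in Set.Ioi (0 : ℝ), ENNReal.ofReal ((1 + b * y ^ ρ) ^ (-p) * Gamma p) := by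
    refine setLIntegral_congr_fun measurableSet_Ioi fun y hy => ?_
    have hy0 : 0 < y := hy
    have hpos : 0 < 1 + b * y ^ ρ := by positivity
    refine lintegral_ofReal_of_integral ?_ ?_ (by positivity)
    · refine ae_restrict_of_forall_mem measurableSet_Ioi fun t ht => ?_
      have : 0 < t := ht
      simp only [Pi.zero_apply]
      positivity
    · rw [integral_rpow_mul_exp_neg_mul_Ioi hp0 hpos, one_div, inv_rpow hpos.le, rpow_neg hpos.le]
  have h2 : ∫⁻ t in Set.Ioi (0 : ℝ), ∫⁻ y in Set.Ioi (0 : ℝ), F y t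
      = ENNReal.ofReal (b ^ (-1 / ρ) * Gamma (1 / ρ + 1) * Gamma (p - 1 / ρ)) := by
    have : ∀ t ∈ Set.Ioi (0 : ℝ), ∫⁻ y in Set.Ioi (0 : ℝ), F y t
        = ENNReal.ofReal (b ^ (-1 / ρ) * Gamma (1 / ρ + 1) *
            (t ^ (p - 1 / ρ - 1) * exp (-(1 * t)))) := by
      intro t ht
      have ht0 : 0 < t := ht
      refine lintegral_ofReal_of_integral ?_ ?_ (by positivity)
      · refine ae_restrict_of_forall_mem measurableSet_Ioi fun y hy => ?_
        simp only [Pi.zero_apply]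
        positivity
      · have : ∀ y : ℝ, t ^ (p - 1) * exp (-((1 + b * y ^ ρ) * t))
            = t ^ (p - 1) * exp (-(1 * t)) * exp (-(b * t) * y ^ ρ) := by
          intro y
          rw [mul_assoc, ← exp_add]
          ring_nf
        simp_rw [this]
        rw [integral_const_mul, integral_exp_neg_mul_rpow hρ (by positivity),
          mul_rpow hb.le ht0.le,
          show p - 1 / ρ - 1 = (p - 1) + (-1 / ρ) by ring, rpow_add ht0]
        ring
    rw [setLIntegral_congr_fun measurableSet_Ioi this]
    refine lintegral_ofReal_of_integral ?_ ?_ (by positivity)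
    · refine ae_restrict_of_forall_mem measurableSet_Ioi fun t ht => ?_
      have : 0 < t := ht
      simp only [Pi.zero_apply]
      positivity
    · rw [integral_const_mul, integral_rpow_mul_exp_neg_mul_Ioi (by linarith) one_pos]
      simp
  have h3 : ∫ y in Set.Ioi (0 : ℝ), (1 + b * y ^ ρ) ^ (-p) * Gamma p
      = b ^ (-1 / ρ) * Gamma (1 / ρ + 1) * Gamma (p - 1 / ρ) := by
    rw [integral_eq_lintegral_of_nonneg_ae, ← h1, hswap, h2, ENNReal.toReal_ofReal (by positivity)]
    · refine ae_restrict_of_forall_mem measurableSet_Ioi fun t ht => ?_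
      have : 0 < t := ht
      simp only [Pi.zero_apply]
      positivity
    · exact Measurable.aestronglyMeasurable (by fun_prop)
  rw [integral_mul_const] at h3
  rw [← h3]
  field_simp

/-- The substitution `v = b * y ^ ρ` turns this into the Beta integral `B (1 / ρ, q + 1)`, whose value
is read off from the normalization of the Beta distribution. -/
lemma integral_max_one_sub_rpow {ρ b q : ℝ} (hρ : 0 < ρ) (hb : 0 < b) (hq : 0 < q) :
    ∫ y in Set.Ioi (0 : ℝ), (max (1 - b * y ^ ρ) 0) ^ q
      = b ^ (-1 / ρ) * Gamma (1 / ρ + 1) * Gamma (q + 1) / Gamma (q + 1 + 1 / ρ) := by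
  have hρ' : 0 < 1 / ρ := by positivity
  have hbeta : ∫ v in Set.Ioi (0 : ℝ), v ^ (1 / ρ - 1) * (max (1 - v) 0) ^ q
      = ProbabilityTheory.beta (1 / ρ) (q + 1) := by
    have hB := ProbabilityTheory.beta_pos hρ' (by linarith : 0 < q + 1)
    have h1 : ∫ v, ProbabilityTheory.betaPDFReal (1 / ρ) (q + 1) v = 1 := by
      rw [integral_eq_lintegral_of_nonneg_ae]
      · have := ProbabilityTheory.lintegral_betaPDF_eq_one hρ' (by linarith : 0 < q + 1)
        simp only [ProbabilityTheory.betaPDF] at this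
        rw [this, ENNReal.toReal_one]
      · refine Filter.Eventually.of_forall fun v => ?_
        by_cases h : 0 < v ∧ v < 1
        · exact (ProbabilityTheory.betaPDFReal_pos h.1 h.2 hρ' (by linarith)).le
        · simp [ProbabilityTheory.betaPDFReal, h]
      · exact Measurable.aestronglyMeasurable (by fun_prop)
    rw [← setIntegral_eq_integral_of_forall_compl_eq_zero (s := Set.Ioi 0)] at h1
    · have h2 : ∀ v ∈ Set.Ioi (0 : ℝ), v ^ (1 / ρ - 1) * (max (1 - v) 0) ^ q
          = ProbabilityTheory.beta (1 / ρ) (q + 1) *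
            ProbabilityTheory.betaPDFReal (1 / ρ) (q + 1) v := by
        intro v hv
        have hv0 : 0 < v := hv
        by_cases h : v < 1
        · simp only [ProbabilityTheory.betaPDFReal, hv0, h, and_self, if_true]
          rw [max_eq_left (by linarith), add_sub_cancel_right]
          field_simp
        · simp only [ProbabilityTheory.betaPDFReal, h, and_false, if_false]
          rw [max_eq_right (by linarith), zero_rpow hq.ne']
          simp
      rw [setIntegral_congr_fun measurableSet_Ioi h2, integral_const_mul, h1, mul_one]
    · intro v hv
      have : ¬ (0 < v) := hv
      simp [ProbabilityTheory.betaPDFReal, this]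
  have hscale := integral_comp_mul_left_Ioi
    (fun v => v ^ (1 / ρ - 1) * (max (1 - v) 0) ^ q) 0 hb
  rw [mul_zero, hbeta] at hscale
  rw [← integral_comp_rpow_Ioi_of_pos hρ']
  have h3 : ∀ u ∈ Set.Ioi (0 : ℝ),
      (1 / ρ * u ^ (1 / ρ - 1)) • (max (1 - b * (u ^ (1 / ρ)) ^ ρ) 0) ^ q
      = (1 / ρ * b ^ (1 - 1 / ρ)) * ((b * u) ^ (1 / ρ - 1) * (max (1 - b * u) 0) ^ q) := by
    intro u hu
    have hu0 : 0 < u := hu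
    have hbb : b ^ (1 - 1 / ρ) * b ^ (1 / ρ - 1) = 1 := by
      rw [← rpow_add hb]; simp
    rw [← rpow_mul hu0.le, one_div_mul_cancel hρ.ne', rpow_one, mul_rpow hb.le hu0.le,
      smul_eq_mul]
    linear_combination (-(1 / ρ * u ^ (1 / ρ - 1) * (max (1 - b * u) 0) ^ q)) * hbb
  rw [setIntegral_congr_fun measurableSet_Ioi h3, integral_const_mul, hscale]
  have hb1 : b ^ (1 - 1 / ρ) = b * b ^ (-1 / ρ) := by
    rw [show (1 - 1 / ρ : ℝ) = 1 + (-1 / ρ) by ring, rpow_add hb, rpow_one]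
  rw [hb1, ProbabilityTheory.beta, Gamma_add_one hρ'.ne', smul_eq_mul, add_comm (1 / ρ) (q + 1)]
  field_simp

/-! ### Comparison with the extremal profile -/

lemma integral_rpow_pos {X : Type*} [MeasurableSpace X] {μ : Measure X} {α : ℝ} {f : X → ℝ}
    (hα0 : 0 < α) (hf0 : ∀ x, 0 ≤ f x) (hf1 : ∫ x, f x ∂μ = 1)
    (hfα : Integrable (fun x => f x ^ α) μ) : 0 < ∫ x, f x ^ α ∂μ := by
  have h0 : ∀ x, 0 ≤ f x ^ α := fun x => rpow_nonneg (hf0 x) α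
  refine lt_of_le_of_ne (integral_nonneg h0) fun h => ?_
  have h1 := (integral_eq_zero_iff_of_nonneg h0 hfα).1 h.symm
  have h2 : f =ᵐ[μ] fun _ => (0 : ℝ) := by
    filter_upwards [h1] with x hx
    exact (rpow_eq_zero (hf0 x) hα0.ne').1 hx
  rw [integral_congr_ae h2, integral_zero] at hf1
  exact zero_ne_one hf1

/-- The abstract maximum-entropy bound. The function `w` is the base of the extremal density
`N⁻¹ * w ^ (1 / (α - 1))`; besides its sign, `w` enters only through the values of
`∫ w ^ (1 / (α - 1))`, `∫ w ^ (α / (α - 1))` and the (in)equality for `∫ w * f`. -/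
lemma entropy_le_of_profile {X : Type*} [MeasurableSpace X] {μ : Measure X} {α K N : ℝ}
    {f w : X → ℝ} (hα0 : 0 < α) (hα1 : α ≠ 1)
    (hf0 : ∀ x, 0 ≤ f x) (hf1 : ∫ x, f x ∂μ = 1) (hfα : Integrable (fun x => f x ^ α) μ)
    (hw0 : ∀ x, 0 ≤ w x) (hw : α < 1 → ∀ x, 0 < w x) (hK : 0 < K) (hN : 0 < N)
    (hg : ∫ x, w x ^ (1 / (α - 1)) ∂μ = N) (hG : ∫ x, w x ^ (α / (α - 1)) ∂μ = N * K)
    (hwf : Integrable (fun x => w x * f x) μ) (hA : K ≤ ∫ x, w x * f x ∂μ)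
    (hA' : α < 1 → ∫ x, w x * f x ∂μ = K) :
    (1 / (1 - α)) * log (∫ x, f x ^ α ∂μ) ≤ log N + (1 / (1 - α)) * log K ∧
    ((1 / (1 - α)) * log (∫ x, f x ^ α ∂μ) = log N + (1 / (1 - α)) * log K ↔
      ∃ c > 0, f =ᵐ[μ] fun x => c * w x ^ (1 / (α - 1))) := by
  have hα1' : α - 1 ≠ 0 := sub_ne_zero.2 hα1
  have hI := integral_rpow_pos hα0 hf0 hf1 hfα
  have hGi : Integrable (fun x => w x ^ (α / (α - 1))) μ :=
    Integrable.of_integral_ne_zero (by rw [hG]; positivity)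
  set I := ∫ x, f x ^ α ∂μ with hIdef
  set M := N ^ (1 - α) * K with hM
  have hM0 : 0 < M := by positivity
  set A := ∫ x, w x * f x ∂μ with hAdef
  set s : X → ℝ := fun x => N⁻¹ * w x ^ (1 / (α - 1)) with hs
  have hNα : N⁻¹ ^ α * N = N ^ (1 - α) := by
    rw [inv_rpow hN.le, rpow_sub hN, rpow_one]; field_simp
  have hs1 : ∀ x, s x ^ (α - 1) = N ^ (1 - α) * w x := by
    intro x
    rw [hs, mul_rpow (by positivity) (rpow_nonneg (hw0 x) _), ← rpow_mul (hw0 x),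
      one_div_mul_cancel hα1', rpow_one, inv_rpow hN.le, ← rpow_neg hN.le, neg_sub]
  have hsα : ∀ c : ℝ, 0 ≤ c → ∀ x, (c * w x ^ (1 / (α - 1))) ^ α
      = c ^ α * w x ^ (α / (α - 1)) := by
    intro c hc x
    rw [mul_rpow hc (rpow_nonneg (hw0 x) _), ← rpow_mul (hw0 x), one_div_mul_eq_div]
  set D : X → ℝ := fun x =>
    (α - 1) * (f x ^ α - α * s x ^ (α - 1) * f x + (α - 1) * s x ^ α) with hD
  have htan : ∀ x, 0 ≤ D x ∧ (D x = 0 → f x = s x) := by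
    intro x
    refine bernoulli_defect hα0 hα1 (hf0 x) ?_
    rcases (hw0 x).lt_or_eq with h | h
    · left
      have := rpow_pos_of_pos h (1 / (α - 1))
      positivity
    · right
      refine ⟨?_, ?_⟩
      · simp only [hs, ← h]
        rw [zero_rpow (one_div_ne_zero hα1'), mul_zero]
      · rcases lt_or_gt_of_ne hα1 with h' | h'
        · exact absurd h (hw h' x).ne
        · exact h'
  have hDeq : D = fun x => (α - 1) * (f x ^ α - α * N ^ (1 - α) * (w x * f x)
      + (α - 1) * N⁻¹ ^ α * w x ^ (α / (α - 1))) := by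
    funext x
    simp only [hD]
    rw [hs1 x, hsα N⁻¹ (by positivity) x]
    ring
  have hi1 := hwf.const_mul (α * N ^ (1 - α))
  have hi2 := hGi.const_mul ((α - 1) * N⁻¹ ^ α)
  have hi3 : Integrable (fun x => f x ^ α - α * N ^ (1 - α) * (w x * f x)) μ := hfα.sub hi1
  have hDi : Integrable D μ := by
    rw [hDeq]
    exact (hi3.add hi2).const_mul (α - 1)
  have hDint : ∫ x, D x ∂μ = (α - 1) * (I - M) - (α - 1) * α * N ^ (1 - α) * (A - K) := by
    rw [hDeq, integral_const_mul, integral_add hi3 hi2, integral_sub hfα hi1,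
      integral_const_mul, integral_const_mul, hG, ← hIdef, ← hAdef]
    linear_combination (α - 1) * (α - 1) * K * hNα
  have hAK : 0 ≤ (α - 1) * α * N ^ (1 - α) * (A - K) := by
    rcases lt_or_gt_of_ne hα1 with h | h
    · rw [hA' h]; simp
    · have h1 : 0 ≤ A - K := by linarith
      have h2 : 0 < α - 1 := by linarith
      positivity
  have hDnn : 0 ≤ ∫ x, D x ∂μ := integral_nonneg fun x => (htan x).1
  have hIM : 0 ≤ (α - 1) * (I - M) := by linarith
  have hlog : log N + (1 / (1 - α)) * log K = (1 / (1 - α)) * log M := by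
    have : 1 - α ≠ 0 := fun h => hα1' (by linarith)
    rw [hM, log_mul (by positivity) hK.ne', log_rpow hN]
    field_simp
  rw [hlog]
  have h1α : (1 / (1 - α)) ≠ 0 := one_div_ne_zero fun h => hα1' (by linarith)
  constructor
  · rcases lt_or_gt_of_ne hα1 with h | h
    · have : I ≤ M := by nlinarith
      exact mul_le_mul_of_nonneg_left (log_le_log hI this) (by
        have : 0 < 1 - α := by linarith
        positivity)
    · have : M ≤ I := by nlinarith
      exact mul_le_mul_of_nonpos_left (log_le_log hM0 this)
        (one_div_nonpos.2 (by linarith))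
  · rw [mul_right_inj' h1α]
    constructor
    · intro h
      have hIM' : I = M := log_injOn_pos hI hM0 h
      have hD0 : ∫ x, D x ∂μ = 0 := by
        rw [hIM', sub_self, mul_zero] at hDint
        linarith
      refine ⟨N⁻¹, by positivity, ?_⟩
      filter_upwards [(integral_eq_zero_iff_of_nonneg (fun x => (htan x).1) hDi).1 hD0] with x hx
      exact (htan x).2 hx
    · rintro ⟨c, hc, hfc⟩
      have hcN : c = N⁻¹ := by
        rw [integral_congr_ae hfc, integral_const_mul, hg] at hf1
        field_simp
        exact hf1
      congr 1
      have : (fun x => f x ^ α) =ᵐ[μ] fun x => c ^ α * w x ^ (α / (α - 1)) := by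
        filter_upwards [hfc] with x hx
        rw [hx, hsα c hc.le x]
      rw [hIdef, integral_congr_ae this, integral_const_mul, hG, hM, hcN, ← hNα]
      ring

/-- The only place where the moment constraint is used: `∫ (1 + β |x| ^ ρ / θ) f = 1 + β`, and
truncating the first factor at `0` can only increase the integral. -/
lemma integrable_max_mul {μ : Measure ℝ} {ρ β θ : ℝ} {f : ℝ → ℝ}
    (hf0 : ∀ x, 0 ≤ f x) (hf1 : ∫ x, f x ∂μ = 1) (hfi : Integrable f μ) (hθ0 : 0 < θ)
    (hθ : θ = ∫ x, |x| ^ ρ * f x ∂μ) (hθi : Integrable (fun x => |x| ^ ρ * f x) μ) :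
    Integrable (fun x => max (1 + β * |x| ^ ρ / θ) 0 * f x) μ ∧
      1 + β ≤ ∫ x, max (1 + β * |x| ^ ρ / θ) 0 * f x ∂μ ∧
      (0 ≤ β → ∫ x, max (1 + β * |x| ^ ρ / θ) 0 * f x ∂μ = 1 + β) := by
  have hi : Integrable (fun x => f x + β / θ * (|x| ^ ρ * f x)) μ := hfi.add (hθi.const_mul _)
  have hv : ∫ x, (f x + β / θ * (|x| ^ ρ * f x)) ∂μ = 1 + β := by
    rw [integral_add hfi (hθi.const_mul _), integral_const_mul, hf1, ← hθ]
    field_simp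
  have heq : (fun x => max (1 + β * |x| ^ ρ / θ) 0 * f x)
      = fun x => max (f x + β / θ * (|x| ^ ρ * f x)) 0 := by
    funext x
    rw [max_mul_of_nonneg _ _ (hf0 x), zero_mul]
    congr 1
    ring
  have hint : Integrable (fun x => max (1 + β * |x| ^ ρ / θ) 0 * f x) μ := by
    rw [heq]; exact hi.pos_part
  refine ⟨hint, ?_, fun hβ => ?_⟩
  · rw [← hv, heq]
    exact integral_mono hi hi.pos_part fun x => le_max_left _ _
  · rw [← hv, heq]
    refine integral_congr_ae (Filter.Eventually.of_forall fun x => max_eq_left ?_)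
    have := hf0 x
    positivity

lemma moment_pos {μ : Measure ℝ} [NullSingletonClass μ] {ρ : ℝ} {f : ℝ → ℝ}
    (hf0 : ∀ x, 0 ≤ f x) (hf1 : ∫ x, f x ∂μ = 1)
    (hθi : Integrable (fun x => |x| ^ ρ * f x) μ) : 0 < ∫ x, |x| ^ ρ * f x ∂μ := by
  have h0 : ∀ x, 0 ≤ |x| ^ ρ * f x := fun x => mul_nonneg (by positivity) (hf0 x)
  refine lt_of_le_of_ne (integral_nonneg h0) fun h => ?_
  have h1 := (integral_eq_zero_iff_of_nonneg h0 hθi).1 h.symm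
  have hne : ∀ᵐ x ∂μ, x ≠ 0 := by simp [ae_iff]
  have h2 : f =ᵐ[μ] fun _ => (0 : ℝ) := by
    filter_upwards [h1, hne] with x hx hx0
    have : |x| ^ ρ ≠ 0 := (rpow_pos_of_pos (abs_pos.2 hx0) ρ).ne'
    exact (mul_eq_zero.1 hx).resolve_left this
  rw [integral_congr_ae h2, integral_zero] at hf1
  exact zero_ne_one hf1

/-! ### The bounds on the line and on the half-line -/

/-- The case `1 / (1 + ρ) < α < 1`, with `C = 2` for the line and `C = 1` for the half-line. -/
lemma entropy_bound_lt {μ : Measure ℝ} [NullSingletonClass μ] {C : ℝ} (hC : 0 < C)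
    (hμ : ∀ φ : ℝ → ℝ, ∫ x, φ |x| ∂μ = C * ∫ y in Set.Ioi (0 : ℝ), φ y)
    {ρ α : ℝ} (hρ : 0 < ρ) {f : ℝ → ℝ} (hf0 : ∀ x, 0 ≤ f x) (hf1 : ∫ x, f x ∂μ = 1)
    (hfi : Integrable f μ) (hfα : Integrable (fun x => f x ^ α) μ)
    {θ : ℝ} (hθ : θ = ∫ x, |x| ^ ρ * f x ∂μ) (hθi : Integrable (fun x => |x| ^ ρ * f x) μ)
    (hα : 1 / (1 + ρ) < α) (hα1 : α < 1) :
    (1 / (1 - α)) * log (∫ x, f x ^ α ∂μ) ≤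
        (1 / ρ) * log (((1 + ρ) * α - 1) / (1 - α) * θ)
          + (1 / (1 - α)) * log (ρ * α / ((1 + ρ) * α - 1))
          + log (C * Gamma (1 / ρ + 1) * Gamma (1 / (1 - α) - 1 / ρ) / Gamma (1 / (1 - α))) ∧
      ((1 / (1 - α)) * log (∫ x, f x ^ α ∂μ) =
        (1 / ρ) * log (((1 + ρ) * α - 1) / (1 - α) * θ)
          + (1 / (1 - α)) * log (ρ * α / ((1 + ρ) * α - 1))
          + log (C * Gamma (1 / ρ + 1) * Gamma (1 / (1 - α) - 1 / ρ) / Gamma (1 / (1 - α))) ↔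
        ∃ c > 0, f =ᵐ[μ] fun x =>
          c * (max (1 + (1 - α) / ((1 + ρ) * α - 1) * |x| ^ ρ / θ) 0) ^ (1 / (α - 1))) := by
  have hα0 : 0 < α := lt_trans (by positivity) hα
  have hd : 0 < (1 + ρ) * α - 1 := by
    rw [div_lt_iff₀ (by positivity)] at hα; linarith
  have h1α : 0 < 1 - α := by linarith
  have hα1' : α - 1 ≠ 0 := by linarith
  have hθ0 : 0 < θ := by rw [hθ]; exact moment_pos hf0 hf1 hθi
  have hd' : (1 + ρ) * α - 1 ≠ 0 := hd.ne'
  set β := (1 - α) / ((1 + ρ) * α - 1) with hβ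
  have hβ0 : 0 < β := by positivity
  have hK : 1 + β = ρ * α / ((1 + ρ) * α - 1) := by
    rw [hβ, eq_div_iff hd', add_mul, div_mul_cancel₀ _ hd']; ring
  set p := 1 / (1 - α) with hp
  have hpρ : 1 / ρ < p - 1 := by
    have : p - 1 - 1 / ρ = ((1 + ρ) * α - 1) / (ρ * (1 - α)) := by rw [hp]; field_simp; ring
    have h2 : 0 < ((1 + ρ) * α - 1) / (ρ * (1 - α)) := by positivity
    linarith
  have hρ' : 0 < 1 / ρ := by positivity
  have hb : 0 < β / θ := by positivity
  have hint : ∀ r : ℝ, 1 / ρ < r → ∫ x, (max (1 + β * |x| ^ ρ / θ) 0) ^ (-r) ∂μ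
      = C * ((β / θ) ^ (-1 / ρ) * Gamma (1 / ρ + 1) * Gamma (r - 1 / ρ) / Gamma r) := by
    intro r hr
    rw [← integral_one_add_rpow hρ hb hr, hμ fun y => (max (1 + β * y ^ ρ / θ) 0) ^ (-r)]
    congr 1
    refine setIntegral_congr_fun measurableSet_Ioi fun y hy => ?_
    have hy0 : 0 < y := hy
    rw [max_eq_left (by positivity)]
    ring_nf
  have hg1 : 0 < Gamma (1 / ρ + 1) := Gamma_pos_of_pos (by positivity)
  have hg2 : 0 < Gamma (p - 1 - 1 / ρ) := Gamma_pos_of_pos (by linarith)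
  have hg3 : 0 < Gamma (p - 1) := Gamma_pos_of_pos (by linarith)
  have hg4 : Gamma (p - 1 / ρ) = (p - 1 - 1 / ρ) * Gamma (p - 1 - 1 / ρ) := by
    rw [← Gamma_add_one (by linarith)]; ring_nf
  have hg5 : Gamma p = (p - 1) * Gamma (p - 1) := by
    rw [← Gamma_add_one (by linarith)]; ring_nf
  have hg4' : 0 < Gamma (p - 1 / ρ) := Gamma_pos_of_pos (by linarith)
  have hg5' : 0 < Gamma p := Gamma_pos_of_pos (by linarith)
  set N := C * ((β / θ) ^ (-1 / ρ) * Gamma (1 / ρ + 1) * Gamma (p - 1 / ρ) / Gamma p) with hNdef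
  have hN : 0 < N := by positivity
  have hNint : ∫ x, (max (1 + β * |x| ^ ρ / θ) 0) ^ (1 / (α - 1)) ∂μ = N := by
    rw [← neg_sub 1 α, div_neg, ← hp, hint p (by linarith)]
  have hGint : ∫ x, (max (1 + β * |x| ^ ρ / θ) 0) ^ (α / (α - 1)) ∂μ = N * (1 + β) := by
    have he : α / (α - 1) = -(p - 1) := by
      rw [hp]; field_simp; ring
    have hKp : (1 + β) * (p - 1 - 1 / ρ) = p - 1 := by
      have hpe : p - 1 - 1 / ρ = ((1 + ρ) * α - 1) / (ρ * (1 - α)) := by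
        rw [hp]; field_simp; ring
      rw [hpe, hK, div_mul_div_cancel₀ hd', hp]
      field_simp
      ring
    have hp1 : p - 1 ≠ 0 := by linarith
    have hp2 : p - 1 - 1 / ρ ≠ 0 := by linarith
    rw [he, hint (p - 1) hpρ, hNdef, hg4, hg5]
    rw [show C * ((β / θ) ^ (-1 / ρ) * Gamma (1 / ρ + 1) *
        ((p - 1 - 1 / ρ) * Gamma (p - 1 - 1 / ρ)) / ((p - 1) * Gamma (p - 1))) * (1 + β)
      = C * ((β / θ) ^ (-1 / ρ) * Gamma (1 / ρ + 1) *
        (((1 + β) * (p - 1 - 1 / ρ)) * Gamma (p - 1 - 1 / ρ)) / ((p - 1) * Gamma (p - 1)))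
        by ring, hKp]
    field_simp
  have hlogN : log N = (1 / ρ) * log (((1 + ρ) * α - 1) / (1 - α) * θ)
      + log (C * Gamma (1 / ρ + 1) * Gamma (p - 1 / ρ) / Gamma p) := by
    have hbi : ((1 + ρ) * α - 1) / (1 - α) * θ = (β / θ)⁻¹ := by
      rw [hβ]; field_simp
    rw [hbi, log_inv, show N = (β / θ) ^ (-1 / ρ) *
      (C * Gamma (1 / ρ + 1) * Gamma (p - 1 / ρ) / Gamma p) by rw [hNdef]; ring,
      log_mul (by positivity) (by positivity), log_rpow hb]
    ring
  obtain ⟨hwi, hA, hA'⟩ := integrable_max_mul (β := β) hf0 hf1 hfi hθ0 hθ hθi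
  have key := entropy_le_of_profile hα0 hα1.ne hf0 hf1 hfα
    (fun x => le_max_right (1 + β * |x| ^ ρ / θ) 0)
    (fun _ x => lt_max_of_lt_left (by positivity)) (by positivity) hN hNint hGint hwi hA
    (fun _ => hA' hβ0.le)
  rw [hlogN, hK, ← hp] at key
  convert key using 2
  · ring
  · constructor <;> intro h <;> linarith

/-- The case `α > 1`, where `β < 0` and the extremal density has compact support. -/
lemma entropy_bound_gt {μ : Measure ℝ} [NullSingletonClass μ] {C : ℝ} (hC : 0 < C)
    (hμ : ∀ φ : ℝ → ℝ, ∫ x, φ |x| ∂μ = C * ∫ y in Set.Ioi (0 : ℝ), φ y)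
    {ρ α : ℝ} (hρ : 0 < ρ) {f : ℝ → ℝ} (hf0 : ∀ x, 0 ≤ f x) (hf1 : ∫ x, f x ∂μ = 1)
    (hfi : Integrable f μ) (hfα : Integrable (fun x => f x ^ α) μ)
    {θ : ℝ} (hθ : θ = ∫ x, |x| ^ ρ * f x ∂μ) (hθi : Integrable (fun x => |x| ^ ρ * f x) μ)
    (hα1 : 1 < α) :
    (1 / (1 - α)) * log (∫ x, f x ^ α ∂μ) ≤
        (1 / ρ) * log (((1 + ρ) * α - 1) / (α - 1) * θ)
          + (1 / (α - 1)) * log (((1 + ρ) * α - 1) / (ρ * α))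
          + log (C * Gamma (1 / ρ + 1) * Gamma (α / (α - 1)) / Gamma (α / (α - 1) + 1 / ρ)) ∧
      ((1 / (1 - α)) * log (∫ x, f x ^ α ∂μ) =
        (1 / ρ) * log (((1 + ρ) * α - 1) / (α - 1) * θ)
          + (1 / (α - 1)) * log (((1 + ρ) * α - 1) / (ρ * α))
          + log (C * Gamma (1 / ρ + 1) * Gamma (α / (α - 1)) / Gamma (α / (α - 1) + 1 / ρ)) ↔
        ∃ c > 0, f =ᵐ[μ] fun x =>
          c * (max (1 + (1 - α) / ((1 + ρ) * α - 1) * |x| ^ ρ / θ) 0) ^ (1 / (α - 1))) := by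
  have hα0 : 0 < α := by linarith
  have h1α : 0 < α - 1 := by linarith
  have hd : 0 < (1 + ρ) * α - 1 := by nlinarith
  have hθ0 : 0 < θ := by rw [hθ]; exact moment_pos hf0 hf1 hθi
  have hd' : (1 + ρ) * α - 1 ≠ 0 := hd.ne'
  set β := (1 - α) / ((1 + ρ) * α - 1) with hβ
  have hβ' : -β = (α - 1) / ((1 + ρ) * α - 1) := by rw [hβ, ← neg_div, neg_sub]
  have hβ0 : 0 < -β := by rw [hβ']; positivity
  have hK : 1 + β = ρ * α / ((1 + ρ) * α - 1) := by
    rw [hβ, eq_div_iff hd', add_mul, div_mul_cancel₀ _ hd']; ring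
  have hK0 : 0 < 1 + β := by rw [hK]; positivity
  set r := α / (α - 1) with hr
  have hr0 : 0 < r := by positivity
  have hρ' : 0 < 1 / ρ := by positivity
  have hb : 0 < -β / θ := by positivity
  have hint : ∀ q : ℝ, 0 < q → ∫ x, (max (1 + β * |x| ^ ρ / θ) 0) ^ q ∂μ
      = C * ((-β / θ) ^ (-1 / ρ) * Gamma (1 / ρ + 1) * Gamma (q + 1) /
          Gamma (q + 1 + 1 / ρ)) := by
    intro q hq
    rw [← integral_max_one_sub_rpow hρ hb hq, hμ fun y => (max (1 + β * y ^ ρ / θ) 0) ^ q]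
    congr 1
    refine setIntegral_congr_fun measurableSet_Ioi fun y _ => ?_
    congr 2
    ring
  have hg1 : 0 < Gamma (1 / ρ + 1) := Gamma_pos_of_pos (by positivity)
  have hg2 : 0 < Gamma r := Gamma_pos_of_pos hr0
  have hg3 : 0 < Gamma (r + 1 / ρ) := Gamma_pos_of_pos (by positivity)
  have hq : 1 / (α - 1) + 1 = r := by rw [hr]; field_simp; ring
  set N := C * ((-β / θ) ^ (-1 / ρ) * Gamma (1 / ρ + 1) * Gamma r / Gamma (r + 1 / ρ)) with hNdef
  have hN : 0 < N := by positivity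
  have hNint : ∫ x, (max (1 + β * |x| ^ ρ / θ) 0) ^ (1 / (α - 1)) ∂μ = N := by
    rw [hint _ (by positivity), hq]
  have hGint : ∫ x, (max (1 + β * |x| ^ ρ / θ) 0) ^ r ∂μ = N * (1 + β) := by
    have hKr : (1 + β) * (r + 1 / ρ) = r := by
      have hre : r + 1 / ρ = ((1 + ρ) * α - 1) / (ρ * (α - 1)) := by
        rw [hr]; field_simp; ring
      rw [hre, hK, div_mul_div_cancel₀ hd', hr]
      field_simp
    have hr1 : r + 1 / ρ ≠ 0 := by positivity
    rw [hint r hr0, hNdef, Gamma_add_one hr0.ne', show r + 1 + 1 / ρ = r + 1 / ρ + 1 by ring,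
      Gamma_add_one hr1]
    have hKr' : 1 + β = r / (r + 1 / ρ) := by rw [eq_div_iff hr1, hKr]
    rw [hKr']
    generalize r + 1 / ρ = z at hr1 hg3 ⊢
    field_simp
  have hlogN : log N = (1 / ρ) * log (((1 + ρ) * α - 1) / (α - 1) * θ)
      + log (C * Gamma (1 / ρ + 1) * Gamma r / Gamma (r + 1 / ρ)) := by
    have hbi : ((1 + ρ) * α - 1) / (α - 1) * θ = (-β / θ)⁻¹ := by
      rw [hβ']; field_simp
    rw [hbi, log_inv, show N = (-β / θ) ^ (-1 / ρ) *
      (C * Gamma (1 / ρ + 1) * Gamma r / Gamma (r + 1 / ρ)) by rw [hNdef]; ring,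
      log_mul (by positivity) (by positivity), log_rpow hb]
    ring
  have hlogK : (1 / (1 - α)) * log (1 + β)
      = (1 / (α - 1)) * log (((1 + ρ) * α - 1) / (ρ * α)) := by
    rw [hK, ← inv_div (ρ * α), log_inv, ← neg_sub α 1, div_neg]
    ring
  obtain ⟨hwi, hA, -⟩ := integrable_max_mul (β := β) hf0 hf1 hfi hθ0 hθ hθi
  have key := entropy_le_of_profile hα0 hα1.ne' hf0 hf1 hfα
    (fun x => le_max_right (1 + β * |x| ^ ρ / θ) 0)
    (fun h => absurd h hα1.not_gt) hK0 hN hNint hGint hwi hA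
    (fun h => absurd h hα1.not_gt)
  rw [hlogN, hlogK] at key
  convert key using 2
  · ring
  · constructor <;> intro h <;> linarith

/-- Maximum Rényi-entropy bound for a fixed `ρ`-th absolute moment (Theorem `lem-three`):
bounds on `h_α(𝒳)` for `1/(1+ρ) < α < 1` and for `α > 1`, with equality iff `𝒳` is a
generalized α-Gaussian, and the corresponding one-sided versions (`𝒳 ≥ 0` a.s.) with the
factor `2` inside the last logarithm removed. -/
theorem maxent_renyi_rho_moment
    (ρ α : ℝ) (hρ : 0 < ρ) (hα0 : 0 < α) (hα1 : α ≠ 1)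
    (f : ℝ → ℝ) (hfm : Measurable f) (hf0 : ∀ x, 0 ≤ f x)
    (hf1 : ∫ x, f x = 1) (hfi : Integrable f)
    (hfα : Integrable (fun x => f x ^ α))
    (θ : ℝ) (hθ : θ = ∫ x, |x| ^ ρ * f x) (hθi : Integrable (fun x => |x| ^ ρ * f x)) :
    ((1 / (1 + ρ) < α ∧ α < 1) →
      ((1 / (1 - α)) * Real.log (∫ x, f x ^ α) ≤
          (1 / ρ) * Real.log (((1 + ρ) * α - 1) / (1 - α) * θ)
            + (1 / (1 - α)) * Real.log (ρ * α / ((1 + ρ) * α - 1))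
            + Real.log (2 * Real.Gamma (1 / ρ + 1) * Real.Gamma (1 / (1 - α) - 1 / ρ)
                / Real.Gamma (1 / (1 - α))) ∧
        ((1 / (1 - α)) * Real.log (∫ x, f x ^ α) =
            (1 / ρ) * Real.log (((1 + ρ) * α - 1) / (1 - α) * θ)
              + (1 / (1 - α)) * Real.log (ρ * α / ((1 + ρ) * α - 1))
              + Real.log (2 * Real.Gamma (1 / ρ + 1) * Real.Gamma (1 / (1 - α) - 1 / ρ)
                  / Real.Gamma (1 / (1 - α))) ↔
          ∃ c > 0, f =ᵐ[volume] fun x =>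
            c * (max (1 + (1 - α) / ((1 + ρ) * α - 1) * |x| ^ ρ / θ) 0) ^ (1 / (α - 1))))) ∧
    (1 < α →
      ((1 / (1 - α)) * Real.log (∫ x, f x ^ α) ≤
          (1 / ρ) * Real.log (((1 + ρ) * α - 1) / (α - 1) * θ)
            + (1 / (α - 1)) * Real.log (((1 + ρ) * α - 1) / (ρ * α))
            + Real.log (2 * Real.Gamma (1 / ρ + 1) * Real.Gamma (α / (α - 1))
                / Real.Gamma (α / (α - 1) + 1 / ρ)) ∧
        ((1 / (1 - α)) * Real.log (∫ x, f x ^ α) =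
            (1 / ρ) * Real.log (((1 + ρ) * α - 1) / (α - 1) * θ)
              + (1 / (α - 1)) * Real.log (((1 + ρ) * α - 1) / (ρ * α))
              + Real.log (2 * Real.Gamma (1 / ρ + 1) * Real.Gamma (α / (α - 1))
                  / Real.Gamma (α / (α - 1) + 1 / ρ)) ↔
          ∃ c > 0, f =ᵐ[volume] fun x =>
            c * (max (1 + (1 - α) / ((1 + ρ) * α - 1) * |x| ^ ρ / θ) 0) ^ (1 / (α - 1))))) ∧
    ((∀ᵐ x ∂(volume : Measure ℝ), x < 0 → f x = 0) →
      ((1 / (1 + ρ) < α ∧ α < 1) →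
        (1 / (1 - α)) * Real.log (∫ x, f x ^ α) ≤
          (1 / ρ) * Real.log (((1 + ρ) * α - 1) / (1 - α) * θ)
            + (1 / (1 - α)) * Real.log (ρ * α / ((1 + ρ) * α - 1))
            + Real.log (Real.Gamma (1 / ρ + 1) * Real.Gamma (1 / (1 - α) - 1 / ρ)
                / Real.Gamma (1 / (1 - α)))) ∧
      (1 < α →
        (1 / (1 - α)) * Real.log (∫ x, f x ^ α) ≤
          (1 / ρ) * Real.log (((1 + ρ) * α - 1) / (α - 1) * θ)
            + (1 / (α - 1)) * Real.log (((1 + ρ) * α - 1) / (ρ * α))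
            + Real.log (Real.Gamma (1 / ρ + 1) * Real.Gamma (α / (α - 1))
                / Real.Gamma (α / (α - 1) + 1 / ρ)))) := by
  have habs : ∀ φ : ℝ → ℝ, ∫ x, φ |x| = 2 * ∫ y in Set.Ioi (0 : ℝ), φ y :=
    fun _ => integral_comp_abs
  refine ⟨fun h => ?_, fun h => ?_, fun hneg => ?_⟩
  · exact entropy_bound_lt two_pos habs hρ hf0 hf1 hfi hfα hθ hθi h.1 h.2
  · exact entropy_bound_gt two_pos habs hρ hf0 hf1 hfi hfα hθ hθi h
  · have habs1 : ∀ φ : ℝ → ℝ, ∫ x in Set.Ioi (0 : ℝ), φ |x|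
        = 1 * ∫ y in Set.Ioi (0 : ℝ), φ y := by
      intro φ
      rw [one_mul]
      refine setIntegral_congr_fun measurableSet_Ioi fun y hy => ?_
      simp only [abs_of_pos (show (0 : ℝ) < y from hy)]
    have hne : ∀ᵐ x ∂(volume : Measure ℝ), x ≠ 0 := by simp [ae_iff]
    have hzero : ∀ᵐ x ∂(volume : Measure ℝ), x ∉ Set.Ioi (0 : ℝ) → f x = 0 := by
      filter_upwards [hneg, hne] with x hx hx0 hxI
      exact hx (lt_of_le_of_ne (not_lt.1 hxI) hx0)
    have e1 : ∫ x in Set.Ioi (0 : ℝ), f x = 1 := by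
      rw [← hf1]
      exact setIntegral_eq_integral_of_ae_compl_eq_zero hzero
    have eα : ∫ x in Set.Ioi (0 : ℝ), f x ^ α = ∫ x, f x ^ α := by
      refine setIntegral_eq_integral_of_ae_compl_eq_zero ?_
      filter_upwards [hzero] with x hx hxI
      rw [hx hxI, zero_rpow hα0.ne']
    have eθ : θ = ∫ x in Set.Ioi (0 : ℝ), |x| ^ ρ * f x := by
      rw [hθ]
      refine (setIntegral_eq_integral_of_ae_compl_eq_zero ?_).symm
      filter_upwards [hzero] with x hx hxI
      rw [hx hxI, mul_zero]
    refine ⟨fun h => ?_, fun h => ?_⟩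
    · have := (entropy_bound_lt one_pos habs1 hρ hf0 e1 hfi.restrict hfα.restrict eθ
        hθi.restrict h.1 h.2).1
      rwa [eα, one_mul] at this
    · have := (entropy_bound_gt one_pos habs1 hρ hf0 e1 hfi.restrict hfα.restrict eθ
        hθi.restrict h).1
      rwa [eα, one_mul] at this
end

section
/- Let X be an integer-valued random variable with finite variance σ². If 1/3 < α < 1, then H_α(X) < (1/2) ln( (3α−1)/(1−α) · π(σ² + 1/12) ) + (1/(1−α)) ln( 2α/(3α−1) ) + ln( Γ(1/(1−α) − 1/2) / Γ(1/(1−α)) ). If α > 1, then H_α(X) < (1/2) ln( (3α−1)/(α−1) · π(σ² + 1/12) ) + (1/(α−1)) ln( (3α−1)/(2α) ) + ln( Γ(α/(α−1)) / Γ(α/(α−1) + 1/2) ). -/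
open MeasureTheory Real

/-!
Spread the mass `p k` uniformly over the unit interval centred at `k`: the resulting density has the
same Rényi entropy and variance `s = σ² + 1/12`. Its Rényi entropy is at most that of the extremal
density of variance `s`, which is proportional to `(1 + (x-μ)²/R²) ^ (-1/(1-α))` if `α < 1` and to
`(1 - (x-μ)²/R²)₊ ^ (1/(α-1))` if `α > 1`, with `R² = (3α-1)/|1-α| · s`.

Concretely, put `w x = A (1 ± (x-μ)²/R²)`. Young's inequality (`young_lt_one`, `young_gt_one`)
bounds `p k ^ α`, from above if `α < 1` and from below if `α > 1`, by a function of `x` alone plus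
`α * p k * w x`. Integrating over the interval around `k` and summing (`quadrature_bound`) leaves
only the integral of that function and the variance. Equality in Young's inequality fixes the value
of `w x`, and `w` is not constant on any interval, so the inequality is strict. The integrals
are Beta integrals, and the choice `A = (R B) ^ (1-α)`, where `R B` is the normalizing integral of the
extremal profile, turns the bound into `A * (2α/(3α-1))` (`sum_rpow_lt`, `lt_sum_rpow`), whose
logarithm is the stated expression.
-/

/-! ### Beta integrals -/

lemma integral_beta_Ioo (u v : ℝ) (hu : 0 < u) (hv : 0 < v) :
    ∫ x in Set.Ioo (0 : ℝ) 1, x ^ (u - 1) * (1 - x) ^ (v - 1) =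
      Gamma u * Gamma v / Gamma (u + v) := by
  have h := ProbabilityTheory.beta_eq_betaIntegralReal u v hu hv
  rw [ProbabilityTheory.beta, Complex.betaIntegral,
    intervalIntegral.integral_of_le (by norm_num)] at h
  rw [h, ← integral_Ioc_eq_integral_Ioo, ← RCLike.re_to_complex, ← integral_re]
  · refine setIntegral_congr_fun measurableSet_Ioc fun x ⟨hx1, hx2⟩ ↦ ?_
    norm_cast
    rw [← Complex.ofReal_cpow, ← Complex.ofReal_cpow, RCLike.re_to_complex,
      Complex.re_mul_ofReal, Complex.ofReal_re]
    all_goals linarith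
  · convert! Complex.betaIntegral_convergent (u := u) (v := v) (by simpa) (by simpa)
    rw [intervalIntegrable_iff_integrableOn_Ioc_of_le (by simp), IntegrableOn]

lemma integral_comp_sq_eq (f : ℝ → ℝ) :
    ∫ x : ℝ, f (x ^ 2) = ∫ y in Set.Ioi (0 : ℝ), y ^ (-(1 / 2) : ℝ) * f y := by
  have h1 := integral_comp_abs (f := fun x => f (x ^ 2))
  simp only [sq_abs] at h1
  rw [h1, ← integral_comp_rpow_Ioi_of_pos (g := fun y => y ^ (-(1 / 2) : ℝ) * f y)
    (p := 2) (by norm_num), ← integral_const_mul]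
  refine setIntegral_congr_fun measurableSet_Ioi fun x hx => ?_
  have hx : 0 < x := hx
  simp only [smul_eq_mul]
  rw [← rpow_mul hx.le, show (2 : ℝ) * -(1 / 2) = -1 by norm_num, rpow_neg_one,
    show (2 : ℝ) - 1 = 1 by norm_num, rpow_one, rpow_two]
  field_simp

lemma integral_max_one_sub_sq_rpow (b : ℝ) (hb : 0 < b) :
    ∫ x : ℝ, (max (1 - x ^ 2) 0) ^ b = √π * Gamma (b + 1) / Gamma (b + 3 / 2) := by
  rw [integral_comp_sq_eq (fun y => (max (1 - y) 0) ^ b)]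
  have h := integral_beta_Ioo (1 / 2) (b + 1) (by norm_num) (by linarith)
  rw [Gamma_one_half_eq, show 1 / 2 + (b + 1) = b + 3 / 2 by ring] at h
  rw [← h, setIntegral_eq_of_subset_of_forall_sdiff_eq_zero measurableSet_Ioi
    (s := Set.Ioo (0 : ℝ) 1) (fun x hx => hx.1)]
  · refine setIntegral_congr_fun measurableSet_Ioo fun x hx => ?_
    rw [max_eq_left (by linarith [hx.2])]
    norm_num
  · intro x hx
    have h1 : 1 ≤ x := by
      by_contra hc
      exact hx.2 ⟨hx.1, not_le.1 hc⟩
    rw [max_eq_right (by linarith), zero_rpow hb.ne', mul_zero]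

lemma integral_one_add_sq_rpow_neg (c : ℝ) (hc : 1 / 2 < c) :
    ∫ x : ℝ, (1 + x ^ 2) ^ (-c) = √π * Gamma (c - 1 / 2) / Gamma c := by
  rw [integral_comp_sq_eq (fun y => (1 + y) ^ (-c))]
  have h := integral_beta_Ioo (1 / 2) (c - 1 / 2) (by norm_num) (by linarith)
  rw [Gamma_one_half_eq, show 1 / 2 + (c - 1 / 2) = c by ring] at h
  -- The substitution `y = t / (1 - t)` turns the integral over `(0, ∞)` into a Beta integral.
  have him : (fun t : ℝ => t / (1 - t)) '' Set.Ioo 0 1 = Set.Ioi 0 := by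
    ext y
    simp only [Set.mem_image, Set.mem_Ioo, Set.mem_Ioi]
    constructor
    · rintro ⟨t, ⟨h0, h1⟩, rfl⟩
      exact div_pos h0 (by linarith)
    · intro hy
      refine ⟨y / (1 + y), ⟨by positivity, by rw [div_lt_one (by linarith)]; linarith⟩, ?_⟩
      field_simp
      ring
  rw [← h, ← him, integral_image_eq_integral_abs_deriv_smul (f' := fun t => 1 / (1 - t) ^ 2)
    measurableSet_Ioo]
  · refine setIntegral_congr_fun measurableSet_Ioo fun t ht => ?_
    have h0 : 0 < t := ht.1
    have h1 : 0 < 1 - t := by linarith [ht.2]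
    simp only [smul_eq_mul]
    have e : 1 + t / (1 - t) = (1 - t)⁻¹ := by field_simp; ring
    rw [abs_of_pos (by positivity), e, inv_rpow h1.le, rpow_neg h1.le, inv_inv,
      div_rpow h0.le h1.le, show (1 / 2 - 1 : ℝ) = -(1 / 2) by norm_num,
      show c - 1 / 2 - 1 = c + (1 / 2) + (-(2 : ℕ) : ℝ) by push_cast; ring,
      rpow_add h1, rpow_add h1, rpow_neg h1.le, rpow_neg h1.le (2 : ℕ), rpow_natCast]
    field_simp
  · intro t ht
    have h1 : (1 - t) ≠ 0 := by linarith [ht.2]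
    have := (hasDerivAt_id t).div ((hasDerivAt_id t).const_sub 1) h1
    refine HasDerivAt.hasDerivWithinAt ?_
    convert! this using 1
    simp
  · intro s hs t ht hst
    have h1 : (1 - t) ≠ 0 := by linarith [ht.2]
    have h2 : (1 - s) ≠ 0 := by linarith [hs.2]
    simp only at hst
    rw [div_eq_div_iff h2 h1] at hst
    linarith

/-! ### From a pointwise inequality to an inequality of series -/

/-- Discretization step. A pointwise inequality `e k ≤ F x + p k * (a + b * (x - μ) ^ 2)` is averaged
over `x` in the unit interval centred at `k`, where `(x - μ) ^ 2` has mean `(k - μ) ^ 2 + 1 / 12`;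
the averages `T k` then sum to `∫ F + a + b * (s2 + 1 / 12)`. Hypothesis `hlt` says that for one `k`
equality forces a fixed value of the quadratic; since the quadratic is not constant on an
interval, the averaged inequality is strict for that `k`. -/
lemma quadrature_bound (p : ℤ → ℝ) (hp1 : HasSum p 1) (μ s2 : ℝ)
    (hs2 : HasSum (fun k : ℤ => ((k : ℝ) - μ) ^ 2 * p k) s2)
    (F : ℝ → ℝ) (hF : Continuous F) (hFi : Integrable F) (a b : ℝ) (hb : b ≠ 0)
    (e : ℤ → ℝ)
    (hle : ∀ k x, e k ≤ F x + p k * (a + b * (x - μ) ^ 2))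
    (hlt : ∃ k C, ∀ x, e k = F x + p k * (a + b * (x - μ) ^ 2) → a + b * (x - μ) ^ 2 = C) :
    ∃ T : ℤ → ℝ, HasSum T ((∫ x, F x) + (a + b * (s2 + 1 / 12))) ∧ (∀ k, e k ≤ T k) ∧
      ∃ k, e k < T k := by
  have hc : ∀ k, Continuous (fun x => F x + p k * (a + b * (x - μ) ^ 2)) := fun k => by fun_prop
  have hec : ∀ k : ℤ, ∫ x in (-(1 / 2) + k : ℝ)..(-(1 / 2) + k + 1), e k = e k := fun k => by simp
  refine ⟨fun k => ∫ x in (-(1 / 2) + k : ℝ)..(-(1 / 2) + k + 1),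
      (F x + p k * (a + b * (x - μ) ^ 2)), ?_, ?_, ?_⟩
  · have h1 := hFi.hasSum_intervalIntegral (-(1 / 2))
    have h2 := (hp1.mul_left (a + b / 12)).add (hs2.mul_left b)
    convert! h1.add h2 using 1
    · funext k
      rw [intervalIntegral.integral_add (hF.intervalIntegrable _ _)
        (Continuous.intervalIntegrable (by fun_prop) _ _)]
      congr 1
      have : ∀ x : ℝ, HasDerivAt (fun x => p k * (a * x + b * ((x - μ) ^ 3 / 3)))
          (p k * (a + b * (x - μ) ^ 2)) x := fun x => by
        have h3 := ((((hasDerivAt_id x).sub_const μ).pow 3).div_const 3).const_mul b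
        have := ((((hasDerivAt_id x).const_mul a)).add h3).const_mul (p k)
        convert! this using 1
        simp
      rw [intervalIntegral.integral_eq_sub_of_hasDerivAt (fun x _ => this x)
        (Continuous.intervalIntegrable (by fun_prop) _ _)]
      ring
    · ring
  · intro k
    rw [← hec k]
    exact intervalIntegral.integral_mono_on (by linarith) (by simp)
      ((hc k).intervalIntegrable _ _) (fun x _ => hle k x)
  · obtain ⟨k, C, hC⟩ := hlt
    refine ⟨k, ?_⟩
    nth_rw 1 [← hec k]
    refine intervalIntegral.integral_lt_integral_of_continuousOn_of_le_of_exists_lt (by linarith)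
      continuousOn_const (hc k).continuousOn (fun x _ => hle k x) ?_
    by_contra! hcon
    have hq : ∀ x ∈ Set.Icc (-(1 / 2) + k : ℝ) (-(1 / 2) + k + 1), a + b * (x - μ) ^ 2 = C :=
      fun x hx => hC x (le_antisymm (hle k x) (hcon x hx))
    have q1 := hq (-(1 / 2) + k) ⟨by linarith, by linarith⟩
    have q2 := hq k ⟨by linarith, by linarith⟩
    have q3 := hq (-(1 / 2) + k + 1) ⟨by linarith, by linarith⟩
    -- The second difference of the quadratic at these three points is `b / 2`.
    exact hb (by linarith)

/-! ### Young's inequality with its equality case -/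

lemma young_lt_one (α u w : ℝ) (h0 : 0 < α) (h1 : α < 1) (hu : 0 ≤ u) (hw : 0 < w) :
    u ^ α ≤ (1 - α) * w ^ (-(α / (1 - α))) + α * (u * w) ∧
    (u ^ α = (1 - α) * w ^ (-(α / (1 - α))) + α * (u * w) →
      w = u ^ (α - 1)) := by
  have h2 : 0 < 1 - α := by linarith
  have key : (w ^ (-(α / (1 - α)))) ^ (1 - α) * (u * w) ^ α = u ^ α := by
    rw [← rpow_mul hw.le, mul_rpow hu hw.le]
    rw [show -(α / (1 - α)) * (1 - α) = -α by field_simp, rpow_neg hw.le]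
    have := rpow_pos_of_pos hw α
    field_simp
  constructor
  · rw [← key]
    exact geom_mean_le_arith_mean2_weighted h2.le h0.le (by positivity) (by positivity) (by ring)
  · intro h
    have hwu : w ^ (-(α / (1 - α))) = u * w := by
      by_contra hne
      have := (geom_mean_lt_arith_mean2_weighted_iff_of_pos h2 h0
        (rpow_nonneg hw.le (-(α / (1 - α)))) (mul_nonneg hu hw.le) (by ring)).2 hne
      linarith
    have hu' : u = w ^ (-(1 / (1 - α))) := by
      rw [show -(1 / (1 - α)) = -(α / (1 - α)) - 1 by field_simp; ring, rpow_sub_one hw.ne', hwu]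
      field_simp
    rw [hu', ← rpow_mul hw.le, show -(1 / (1 - α)) * (α - 1) = 1 by field_simp; ring, rpow_one]

/-- Here `w` may be negative, which is why its positive part appears on the right. -/
lemma young_gt_one (α u w : ℝ) (h1 : 1 < α) (hu : 0 ≤ u) :
    α * (u * w) ≤ u ^ α + (α - 1) * (max w 0) ^ (α / (α - 1)) ∧
    (0 < u → α * (u * w) = u ^ α + (α - 1) * (max w 0) ^ (α / (α - 1)) →
      w = (u ^ α) ^ (α / (α - 1))⁻¹) := by
  have h2 : 0 < α - 1 := by linarith
  have hb : 0 < α / (α - 1) := by positivity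
  have hpq : α.HolderConjugate (α / (α - 1)) := Real.HolderConjugate.conjExponent h1
  have hm : 0 ≤ max w 0 := le_max_right _ _
  have hy := young_inequality_of_nonneg hu hm hpq
  have e : α * (u ^ α / α + (max w 0) ^ (α / (α - 1)) / (α / (α - 1))) =
      u ^ α + (α - 1) * (max w 0) ^ (α / (α - 1)) := by
    generalize (max w 0) ^ (α / (α - 1)) = z
    field_simp
  have hle : α * (u * max w 0) ≤ u ^ α + (α - 1) * (max w 0) ^ (α / (α - 1)) := by
    rw [← e]; exact mul_le_mul_of_nonneg_left hy (by linarith)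
  have hle2 : α * (u * w) ≤ α * (u * max w 0) := by
    gcongr
    exact le_max_left _ _
  refine ⟨hle2.trans hle, fun hu0 heq => ?_⟩
  have e1 : α * (u * w) = α * (u * max w 0) := by linarith
  have e2 : w = max w 0 := by
    have : α * u ≠ 0 := by positivity
    apply mul_left_cancel₀ this
    linarith
  have e3 : u ^ α = (max w 0) ^ (α / (α - 1)) := by
    rw [← young_inequality_eq_iff_of_nonneg hu hm hpq]
    have : α ≠ 0 := by positivity
    apply mul_left_cancel₀ this
    rw [e, ← e1, heq]
  rw [e3, ← rpow_mul hm, mul_inv_cancel₀ hb.ne', rpow_one]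
  exact e2

/-! ### Translation and scaling of integrals -/

lemma integral_comp_sub_div (f : ℝ → ℝ) (m R : ℝ) (hR : 0 < R) :
    ∫ x, f ((x - m) / R) = R * ∫ x, f x := by
  rw [integral_sub_right_eq_self (fun x => f (x / R)) m, Measure.integral_comp_div, abs_of_pos hR,
    smul_eq_mul]

lemma integrable_comp_sub_div (f : ℝ → ℝ) (hf : Integrable f) (m R : ℝ) (hR : 0 < R) :
    Integrable (fun x => f ((x - m) / R)) :=
  (hf.comp_div hR.ne').comp_sub_right m

/-! ### Bounds on the power sums -/

lemma log_profile (α s D G κ : ℝ) (hs : 0 < s) (hD : 0 < D) (hG : 0 < G) (hκ : 0 < κ)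
    (hα : α ≠ 1) :
    1 / (1 - α) * log ((√(D * s) * (√π * G)) ^ (1 - α) * κ) =
      1 / 2 * log (D * (π * s)) + 1 / (1 - α) * log κ + log G := by
  have h1 : 1 - α ≠ 0 := sub_ne_zero.2 hα.symm
  have hpi := pi_pos
  have h2 : √(D * s) * (√π * G) = √(D * (π * s)) * G := by
    rw [← mul_assoc, ← sqrt_mul (by positivity), show D * s * π = D * (π * s) by ring]
  have h3 : 0 < √(D * (π * s)) := sqrt_pos.2 (by positivity)
  rw [h2, log_mul (by positivity) hκ.ne', log_rpow (by positivity), log_mul h3.ne' hG.ne',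
    log_sqrt (by positivity)]
  field_simp
  ring

/-- The case `α < 1`. Positivity of the sum is included because `∑'` is `0` for a divergent series;
convergence itself comes from the finite variance and `1 / 3 < α`. -/
lemma sum_rpow_lt (α : ℝ) (h13 : 1 / 3 < α) (h1 : α < 1) (p : ℤ → ℝ) (hp0 : ∀ k, 0 ≤ p k)
    (hp1 : HasSum p 1) (μ s2 : ℝ) (hs2 : HasSum (fun k : ℤ => ((k : ℝ) - μ) ^ 2 * p k) s2) :
    0 < ∑' k, p k ^ α ∧ ∑' k, p k ^ α <
      (√((3 * α - 1) / (1 - α) * (s2 + 1 / 12)) *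
        (√π * (Gamma (1 / (1 - α) - 1 / 2) / Gamma (1 / (1 - α))))) ^ (1 - α) *
      (2 * α / (3 * α - 1)) := by
  have hs0 : 0 ≤ s2 := hs2.nonneg fun k => mul_nonneg (sq_nonneg _) (hp0 k)
  have ha0 : 0 < α := by linarith
  have ha1 : 0 < 1 - α := by linarith
  have ha3 : 0 < 3 * α - 1 := by linarith
  set c := α / (1 - α) with hc
  have hc2 : 1 / 2 < c := by rw [hc, lt_div_iff₀ ha1]; linarith
  have hc1 : 1 / (1 - α) = c + 1 := by rw [hc]; field_simp; ring
  have hκ : 2 * α / (3 * α - 1) = c / (c - 1 / 2) := by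
    rw [hc, div_eq_div_iff ha3.ne' (by rw [← hc]; linarith)]
    field_simp
    ring
  rw [hc1]
  set s := s2 + 1 / 12 with hs
  have hspos : 0 < s := by linarith
  set R := √((3 * α - 1) / (1 - α) * s) with hR
  have hRpos : 0 < R := sqrt_pos.2 (by positivity)
  have hR2 : R ^ 2 = (3 * α - 1) / (1 - α) * s := sq_sqrt (by positivity)
  have g1 := Gamma_add_one (s := c) (by linarith)
  have g2 := Gamma_add_one (s := c - 1 / 2) (by linarith)
  have g3 : 0 < Gamma c := Gamma_pos_of_pos (by linarith)
  have g4 : 0 < Gamma (c - 1 / 2) := Gamma_pos_of_pos (by linarith)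
  rw [show c + 1 - 1 / 2 = c - 1 / 2 + 1 by ring, g1, g2]
  set B := √π * ((c - 1 / 2) * Gamma (c - 1 / 2) / (c * Gamma c)) with hB
  have hcm : 0 < c - 1 / 2 := by linarith
  have hcp : 0 < c := by linarith
  have hBpos : 0 < B := by have := pi_pos; positivity
  -- Both Gamma quotients are values of the same Beta integral at exponents differing by one.
  have hBI : √π * Gamma (c - 1 / 2) / Gamma c = B * (2 * α / (3 * α - 1)) := by
    rw [hκ, hB]
    generalize c - 1 / 2 = d at hcm g4 ⊢
    field_simp
  set A := (R * B) ^ (1 - α) with hA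
  have hApos : 0 < A := by positivity
  set κ := 2 * α / (3 * α - 1) with hκd
  have hκpos : 0 < κ := by positivity
  have hAc : A ^ (-c) * (R * B) = A := by
    rw [hA, ← rpow_mul (by positivity), show (1 - α) * -c = -α by rw [hc]; field_simp]
    nth_rw 2 [← rpow_one (R * B)]
    rw [← rpow_add (by positivity)]
    congr 1
    ring
  have hw : ∀ x : ℝ, 0 < A * (1 + ((x - μ) / R) ^ 2) := fun x => by positivity
  have hFe : ∀ x : ℝ, (1 - α) * (A * (1 + ((x - μ) / R) ^ 2)) ^ (-c) =
      ((1 - α) * A ^ (-c)) * (1 + ((x - μ) / R) ^ 2) ^ (-c) := fun x => by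
    rw [mul_rpow hApos.le (by positivity)]; ring
  have hint : Integrable (fun x : ℝ => (1 + x ^ 2) ^ (-c)) := by
    have := integrable_rpow_neg_one_add_norm_sq (E := ℝ) (μ := volume) (r := 2 * c)
      (by simp; linarith)
    simpa [show -(2 * c) / 2 = -c by ring] using this
  have hq : ∀ x : ℝ, α * A + α * A / R ^ 2 * (x - μ) ^ 2 = α * (A * (1 + ((x - μ) / R) ^ 2)) :=
    fun x => by field_simp
  obtain ⟨T, hT, hle, k, hk⟩ := quadrature_bound p hp1 μ s2 hs2
    (fun x => (1 - α) * (A * (1 + ((x - μ) / R) ^ 2)) ^ (-c))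
    (by
      refine Continuous.mul continuous_const (Continuous.rpow_const (by fun_prop) ?_)
      exact fun x => Or.inl (hw x).ne')
    (by
      simp_rw [hFe]
      exact (integrable_comp_sub_div _ hint μ R hRpos).const_mul _)
    (α * A) (α * A / R ^ 2) (by positivity) (fun k => p k ^ α)
    (fun k x => by
      have := (young_lt_one α (p k) _ ha0 h1 (hp0 k) (hw x)).1
      rw [hq]
      linarith)
    (by
      refine ⟨0, α * p 0 ^ (α - 1), fun x hx => ?_⟩
      rw [hq] at hx ⊢
      have := (young_lt_one α (p 0) _ ha0 h1 (hp0 0) (hw x)).2 (by rw [hx]; ring)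
      rw [← this])
  have hTv : (∫ x, (1 - α) * (A * (1 + ((x - μ) / R) ^ 2)) ^ (-c)) +
      (α * A + α * A / R ^ 2 * (s2 + 1 / 12)) = A * κ := by
    simp_rw [hFe]
    rw [integral_const_mul, integral_comp_sub_div (fun x => (1 + x ^ 2) ^ (-c)) μ R hRpos,
      integral_one_add_sq_rpow_neg c hc2, hBI, ← hs]
    have e1 : (1 - α) * A ^ (-c) * (R * (B * κ)) = (1 - α) * κ * (A ^ (-c) * (R * B)) := by ring
    have e2 : s / R ^ 2 = κ - 1 := by
      have hκ' : κ * (3 * α - 1) = 2 * α := div_mul_cancel₀ _ ha3.ne'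
      rw [hR2, div_eq_iff (by positivity)]
      field_simp
      linear_combination (-1) * hκ'
    rw [e1, hAc]
    linear_combination α * A * e2
  rw [hTv] at hT
  have hsum : Summable (fun k => p k ^ α) :=
    Summable.of_nonneg_of_le (fun k => rpow_nonneg (hp0 k) _) hle hT.summable
  refine ⟨?_, hasSum_lt hle hk hsum.hasSum hT⟩
  obtain ⟨j, hj⟩ : ∃ j, 0 < p j := by
    by_contra! hcon
    have : p = 0 := funext fun k => le_antisymm (hcon k) (hp0 k)
    rw [this] at hp1
    exact zero_ne_one (hasSum_zero.unique hp1)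
  exact hsum.tsum_pos (fun k => rpow_nonneg (hp0 k) _) j (rpow_pos_of_pos hj _)

lemma lt_sum_rpow (α : ℝ) (h1 : 1 < α) (p : ℤ → ℝ) (hp0 : ∀ k, 0 ≤ p k)
    (hp1 : HasSum p 1) (μ s2 : ℝ) (hs2 : HasSum (fun k : ℤ => ((k : ℝ) - μ) ^ 2 * p k) s2) :
      (√((3 * α - 1) / (α - 1) * (s2 + 1 / 12)) *
        (√π * (Gamma (α / (α - 1)) / Gamma (α / (α - 1) + 1 / 2)))) ^ (1 - α) *
      (2 * α / (3 * α - 1)) < ∑' k, p k ^ α := by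
  have hs0 : 0 ≤ s2 := hs2.nonneg fun k => mul_nonneg (sq_nonneg _) (hp0 k)
  have ha0 : 0 < α := by linarith
  have ha1 : 0 < α - 1 := by linarith
  have ha3 : 0 < 3 * α - 1 := by linarith
  set c := α / (α - 1) with hc
  have hcp : 0 < c := by positivity
  have hκ : 2 * α / (3 * α - 1) = c / (c + 1 / 2) := by
    rw [hc, div_eq_div_iff ha3.ne' (by rw [← hc]; linarith)]
    field_simp
    ring
  set s := s2 + 1 / 12 with hs
  have hspos : 0 < s := by linarith
  set R := √((3 * α - 1) / (α - 1) * s) with hR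
  have hRpos : 0 < R := sqrt_pos.2 (by positivity)
  have hR2 : R ^ 2 = (3 * α - 1) / (α - 1) * s := sq_sqrt (by positivity)
  have g1 := Gamma_add_one (s := c) (by linarith)
  have g2 := Gamma_add_one (s := c + 1 / 2) (by linarith)
  have g3 : 0 < Gamma c := Gamma_pos_of_pos (by linarith)
  have g4 : 0 < Gamma (c + 1 / 2) := Gamma_pos_of_pos (by linarith)
  set B := √π * (Gamma c / Gamma (c + 1 / 2)) with hB
  have hBpos : 0 < B := by have := pi_pos; positivity
  -- Both Gamma quotients are values of the same Beta integral at exponents differing by one.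
  have hBI : √π * Gamma (c + 1) / Gamma (c + 3 / 2) = B * (2 * α / (3 * α - 1)) := by
    rw [hκ, hB, show c + 3 / 2 = c + 1 / 2 + 1 by ring, g1, g2]; field_simp
  set A := (R * B) ^ (1 - α) with hA
  have hApos : 0 < A := by positivity
  set κ := 2 * α / (3 * α - 1) with hκd
  have hκpos : 0 < κ := by positivity
  have hAc : A ^ c * (R * B) = A := by
    rw [hA, ← rpow_mul (by positivity), show (1 - α) * c = -α by rw [hc]; field_simp; ring]
    nth_rw 2 [← rpow_one (R * B)]
    rw [← rpow_add (by positivity)]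
    congr 1
    ring
  have hFe : ∀ x : ℝ, (α - 1) * (max (A * (1 - ((x - μ) / R) ^ 2)) 0) ^ c =
      ((α - 1) * A ^ c) * (max (1 - ((x - μ) / R) ^ 2) 0) ^ c := fun x => by
    rw [mul_assoc, ← mul_rpow hApos.le (le_max_right _ _), mul_max_of_nonneg _ _ hApos.le, mul_zero]
  have hint : Integrable (fun x : ℝ => (max (1 - x ^ 2) 0) ^ c) := by
    refine Continuous.integrable_of_hasCompactSupport ?_ ?_
    · exact Continuous.rpow_const (by fun_prop) fun x => Or.inr hcp.le
    · refine HasCompactSupport.intro (isCompact_Icc (a := (-1 : ℝ)) (b := 1)) fun x hx => ?_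
      have : 1 - x ^ 2 ≤ 0 := by
        by_contra! hcon
        exact hx (abs_le.1 (abs_le_one_iff_mul_self_le_one.2 (by nlinarith)))
      rw [max_eq_right this, zero_rpow hcp.ne']
  have hq : ∀ x : ℝ, -(α * A) + α * A / R ^ 2 * (x - μ) ^ 2 =
      -(α * (A * (1 - ((x - μ) / R) ^ 2))) := fun x => by field_simp; ring
  obtain ⟨j, hj⟩ : ∃ j, 0 < p j := by
    by_contra! hcon
    have : p = 0 := funext fun k => le_antisymm (hcon k) (hp0 k)
    rw [this] at hp1
    exact zero_ne_one (hasSum_zero.unique hp1)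
  obtain ⟨T, hT, hle, k, hk⟩ := quadrature_bound p hp1 μ s2 hs2
    (fun x => (α - 1) * (max (A * (1 - ((x - μ) / R) ^ 2)) 0) ^ c)
    (by exact Continuous.mul continuous_const
          (Continuous.rpow_const (by fun_prop) fun x => Or.inr hcp.le))
    (by
      simp_rw [hFe]
      exact (integrable_comp_sub_div _ hint μ R hRpos).const_mul _)
    (-(α * A)) (α * A / R ^ 2) (by positivity) (fun k => -p k ^ α)
    (fun k x => by
      have := (young_gt_one α (p k) (A * (1 - ((x - μ) / R) ^ 2)) h1 (hp0 k)).1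
      rw [hq]
      linarith)
    (by
      refine ⟨j, -(α * (p j ^ α) ^ c⁻¹), fun x hx => ?_⟩
      rw [hq] at hx ⊢
      have := (young_gt_one α (p j) (A * (1 - ((x - μ) / R) ^ 2)) h1 (hp0 j)).2 hj (by linarith)
      rw [← this])
  have hTv : (∫ x, (α - 1) * (max (A * (1 - ((x - μ) / R) ^ 2)) 0) ^ c) +
      (-(α * A) + α * A / R ^ 2 * (s2 + 1 / 12)) = -(A * κ) := by
    simp_rw [hFe]
    rw [integral_const_mul, integral_comp_sub_div (fun x => (max (1 - x ^ 2) 0) ^ c) μ R hRpos,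
      integral_max_one_sub_sq_rpow c hcp, hBI, ← hs]
    have e1 : (α - 1) * A ^ c * (R * (B * κ)) = (α - 1) * κ * (A ^ c * (R * B)) := by ring
    have e2 : s / R ^ 2 = 1 - κ := by
      have hκ' : κ * (3 * α - 1) = 2 * α := div_mul_cancel₀ _ ha3.ne'
      rw [hR2, div_eq_iff (by positivity)]
      field_simp
      linear_combination 1 * hκ'
    rw [e1, hAc]
    linear_combination α * A * e2
  rw [hTv] at hT
  have hple : ∀ k, p k ≤ 1 := fun k => le_hasSum hp1 k fun i _ => hp0 i
  have hsum : Summable (fun k => p k ^ α) :=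
    Summable.of_nonneg_of_le (fun k => rpow_nonneg (hp0 k) _)
      (fun k => rpow_le_self_of_le_one (hp0 k) (hple k) h1.le) hp1.summable
  have := hasSum_lt hle hk hsum.hasSum.neg hT
  linarith

/-- Massey-type inequality for Rényi entropies: if `X` is integer-valued with finite
variance `σ²`, then for `1/3 < α < 1` and for `α > 1` the stated strict upper bounds on
`H_α(X)` in terms of `σ² + 1/12` hold. -/
theorem massey_inequality_renyi
    (α : ℝ)
    (p : ℤ → ℝ) (hp0 : ∀ k, 0 ≤ p k) (hp1 : ∑' k, p k = 1)
    (μ : ℝ) (hμ : μ = ∑' k : ℤ, (k : ℝ) * p k)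
    (hμs : Summable (fun k : ℤ => (k : ℝ) * p k))
    (σ2 : ℝ) (hσ2 : σ2 = ∑' k : ℤ, ((k : ℝ) - μ) ^ 2 * p k)
    (hσ2s : Summable (fun k : ℤ => ((k : ℝ) - μ) ^ 2 * p k)) :
    ((1 / 3 < α ∧ α < 1) →
      (1 / (1 - α)) * Real.log (∑' k, p k ^ α) <
        (1 / 2) * Real.log ((3 * α - 1) / (1 - α) * (π * (σ2 + 1 / 12)))
          + (1 / (1 - α)) * Real.log (2 * α / (3 * α - 1))
          + Real.log (Real.Gamma (1 / (1 - α) - 1 / 2) / Real.Gamma (1 / (1 - α)))) ∧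
    (1 < α →
      (1 / (1 - α)) * Real.log (∑' k, p k ^ α) <
        (1 / 2) * Real.log ((3 * α - 1) / (α - 1) * (π * (σ2 + 1 / 12)))
          + (1 / (α - 1)) * Real.log ((3 * α - 1) / (2 * α))
          + Real.log (Real.Gamma (α / (α - 1)) / Real.Gamma (α / (α - 1) + 1 / 2))) := by
  have hps : HasSum p 1 := by
    have : Summable p := by
      by_contra hcon
      rw [tsum_eq_zero_of_not_summable hcon] at hp1
      exact zero_ne_one hp1
    exact hp1 ▸ this.hasSum
  have hs2 : HasSum (fun k : ℤ => ((k : ℝ) - μ) ^ 2 * p k) σ2 := hσ2 ▸ hσ2s.hasSum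
  have hs0 : 0 ≤ σ2 := hs2.nonneg fun k => mul_nonneg (sq_nonneg _) (hp0 k)
  have hs : 0 < σ2 + 1 / 12 := by linarith
  constructor
  · rintro ⟨h13, h1⟩
    have ha1 : 0 < 1 - α := by linarith
    have ha3 : 0 < 3 * α - 1 := by linarith
    have h2 : 1 < 1 / (1 - α) := by rw [lt_div_iff₀ ha1]; linarith
    obtain ⟨hS0, hS⟩ := sum_rpow_lt α h13 h1 p hp0 hps μ σ2 hs2
    rw [← log_profile α (σ2 + 1 / 12) ((3 * α - 1) / (1 - α)) _ _ hs (by positivity)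
      (div_pos (Gamma_pos_of_pos (by linarith)) (Gamma_pos_of_pos (by linarith)))
      (div_pos (by linarith) ha3) h1.ne]
    exact mul_lt_mul_of_pos_left (log_lt_log hS0 hS) (by positivity)
  · intro h1
    have ha1 : 0 < α - 1 := by linarith
    have ha3 : 0 < 3 * α - 1 := by linarith
    have hc : 0 < α / (α - 1) := by positivity
    have hS := lt_sum_rpow α h1 p hp0 hps μ σ2 hs2
    have hG : 0 < Gamma (α / (α - 1)) / Gamma (α / (α - 1) + 1 / 2) :=
      div_pos (Gamma_pos_of_pos (by linarith)) (Gamma_pos_of_pos (by linarith))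
    have hκ : 1 / (α - 1) * log ((3 * α - 1) / (2 * α)) =
        1 / (1 - α) * log (2 * α / (3 * α - 1)) := by
      rw [← inv_div (2 * α), log_inv, ← neg_sub α 1, div_neg]
      ring
    rw [hκ, ← log_profile α (σ2 + 1 / 12) ((3 * α - 1) / (α - 1)) _ _ hs (by positivity)
      hG (by positivity) h1.ne']
    refine mul_lt_mul_of_neg_left (log_lt_log ?_ hS) (one_div_neg.2 (by linarith))
    have := pi_pos
    positivity
end
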